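/- Let (Ω,Σ,P) be a probability space and m : Σ → ℝ a finitely-additive set function absolutely continuous with respect to P. Then the function L_m on finite measurable partitions, L_m(𝒜) := Σ_{A∈𝒜} m(A)·log₂(1/P(A)), is continuous with respect to the pseudometric D. -/

import Mathlib

/-!
Let `𝒜⁺` and `ℬ⁺` be the sets of atoms of positive measure; null atoms contribute nothing to `Lm`.
If `D(𝒜, ℬ)` is less than `1`, then `|𝒜⁺| = |ℬ⁺|`, because the difference of these two integers is
part of `D`. Moreover `𝒜` and `ℬ` agree off a set `Z` of small measure. Once `P Z` is smaller than
every positive `P A`, each `A ∈ 𝒜⁺` has a trace `A ∖ Z` of positive measure, so it is the trace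
of some `φ A ∈ ℬ⁺`. Since the traces are nonempty and disjoint, `φ` is injective, and hence it is a
bijection `𝒜⁺ → ℬ⁺` by cardinality (`Lm_eq_sum_of_restr_eq`). The symmetric difference of `A` and
`φ A` lies in `Z`, so `P (φ A)` is close to `P A` and, by absolute continuity, `m (φ A)` is
close to `m A`. Each term is a continuous function of these two numbers where `P A > 0`
(`exists_term_close`), and there are finitely many terms.
-/

open MeasureTheory Filter Topology

namespace APE

variable {Ω : Type*} [MeasurableSpace Ω]

/-- A finite measurable partition of `Ω`: a finite collection of nonempty pairwise
disjoint measurable sets whose union is `Ω`. -/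
def IsFinPart (𝒜 : Finset (Set Ω)) : Prop :=
  (∀ A ∈ 𝒜, MeasurableSet A) ∧ (∀ A ∈ 𝒜, A ≠ ∅) ∧
    (𝒜 : Set (Set Ω)).PairwiseDisjoint id ∧ ⋃₀ (𝒜 : Set (Set Ω)) = Set.univ

/-- The join (common refinement) `𝒜 ∨ ℬ` of two finite partitions. -/
noncomputable def join (𝒜 ℬ : Finset (Set Ω)) : Finset (Set Ω) := by
  classical
  exact ((𝒜 ×ˢ ℬ).image fun p => p.1 ∩ p.2).filter fun s => s ≠ ∅

/-- Stochastic independence `𝒜 ⊥ ℬ` of two finite partitions. -/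
def Indep (P : Measure Ω) (𝒜 ℬ : Finset (Set Ω)) : Prop :=
  ∀ A ∈ 𝒜, ∀ B ∈ ℬ, P (A ∩ B) = P A * P B

/-- An additive partition entropy: `I (𝒜·ℬ) = I 𝒜 + I ℬ` for independent partitions. -/
def IsAPE (P : Measure Ω) (I : Finset (Set Ω) → ℝ) : Prop :=
  ∀ 𝒜 ℬ : Finset (Set Ω), IsFinPart 𝒜 → IsFinPart ℬ → Indep P 𝒜 ℬ →
    I (join 𝒜 ℬ) = I 𝒜 + I ℬ

/-- Restriction `𝒜|S` of a partition to a set `S`. -/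
noncomputable def restr (𝒜 : Finset (Set Ω)) (S : Set Ω) : Finset (Set Ω) := by
  classical
  exact (𝒜.image fun A => A ∩ S).filter fun s => s ≠ ∅

/-- The number `N(𝒜)` of atoms of positive measure. -/
noncomputable def numPos (P : Measure Ω) (𝒜 : Finset (Set Ω)) : ℕ := by
  classical
  exact (𝒜.filter fun A => 0 < P A).card

/-- The pseudometric `D` on finite partitions. -/
noncomputable def Ddist (P : Measure Ω) (𝒜 ℬ : Finset (Set Ω)) : ℝ :=
  sInf ((fun Z => (P Z).toReal) ''
      {Z : Set Ω | MeasurableSet Z ∧ restr 𝒜 Zᶜ = restr ℬ Zᶜ}) +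
    |(numPos P 𝒜 : ℝ) - (numPos P ℬ : ℝ)|

/-- Continuity of `I` with respect to the pseudometric `D`. -/
def CtsD (P : Measure Ω) (I : Finset (Set Ω) → ℝ) : Prop :=
  ∀ 𝒜 : Finset (Set Ω), IsFinPart 𝒜 → ∀ ε : ℝ, 0 < ε → ∃ δ : ℝ, 0 < δ ∧
    ∀ ℬ : Finset (Set Ω), IsFinPart ℬ → Ddist P 𝒜 ℬ < δ → |I ℬ - I 𝒜| < ε

/-- The two-atom partition `{A, Ω ∖ A}`. -/
noncomputable def twoPart (A : Set Ω) : Finset (Set Ω) := by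
  classical
  exact {A, Aᶜ}

/-- Continuity of `I` on the family `𝔄₂` of two-atom partitions. -/
def CtsOnA2 (P : Measure Ω) (I : Finset (Set Ω) → ℝ) : Prop :=
  ∀ (A : Set Ω) (As : ℕ → Set Ω), MeasurableSet A → (∀ n, MeasurableSet (As n)) →
    0 < P A → P A < 1 →
    Tendsto (fun n => (P (symmDiff A (As n))).toReal) atTop (𝓝 0) →
    Tendsto (fun n => I (twoPart (As n))) atTop (𝓝 (I (twoPart A)))

/-- The Darboux property of a measure. -/
def Darboux (P : Measure Ω) : Prop :=
  ∀ A : Set Ω, MeasurableSet A → ∀ θ : ENNReal, 0 < θ → θ < P A →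
    ∃ B : Set Ω, MeasurableSet B ∧ B ⊆ A ∧ P B = θ

/-- Nonatomicity of a measure. -/
def NonAtomic (P : Measure Ω) : Prop :=
  ∀ A : Set Ω, MeasurableSet A → 0 < P A →
    ∃ B : Set Ω, MeasurableSet B ∧ B ⊆ A ∧ 0 < P B ∧ P B < P A

/-- A finitely additive real set function on measurable sets. -/
def FinAdd (m : Set Ω → ℝ) : Prop :=
  ∀ A B : Set Ω, MeasurableSet A → MeasurableSet B → Disjoint A B →
    m (A ∪ B) = m A + m B

/-- A countably additive real set function on measurable sets. -/
def CountAdd (m : Set Ω → ℝ) : Prop :=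
  ∀ f : ℕ → Set Ω, (∀ n, MeasurableSet (f n)) →
    (∀ i j, i ≠ j → Disjoint (f i) (f j)) →
    HasSum (fun n => m (f n)) (m (⋃ n, f n))

/-- Absolute continuity of `m` with respect to `P`. -/
def AbsCont (P : Measure Ω) (m : Set Ω → ℝ) : Prop :=
  ∀ ε : ℝ, 0 < ε → ∃ δ : ℝ, 0 < δ ∧
    ∀ A : Set Ω, MeasurableSet A → (P A).toReal < δ → |m A| < ε

/-- The entropy `L_m(𝒜) = Σ_{A∈𝒜} m(A)·log₂(1/P(A))`.  (If `P A = 0` then the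
corresponding term vanishes: `m A = 0` for `m` vanishing on null sets, which
implements the convention `0·(+∞) = 0`.) -/
noncomputable def Lm (P : Measure Ω) (m : Set Ω → ℝ) (𝒜 : Finset (Set Ω)) : ℝ :=
  ∑ A ∈ 𝒜, m A * Real.logb 2 (1 / (P A).toReal)

/-- Two partitions have the same measures of atoms. -/
def SameMeasures (P : Measure Ω) (𝒜 ℬ : Finset (Set Ω)) : Prop :=
  ∃ e : {A : Set Ω // A ∈ 𝒜} ≃ {B : Set Ω // B ∈ ℬ}, ∀ A, P (e A).1 = P A.1

/-- `I` depends solely on the measures of atoms. -/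
def DependsOnMeasures (P : Measure Ω) (I : Finset (Set Ω) → ℝ) : Prop :=
  ∀ 𝒜 ℬ : Finset (Set Ω), IsFinPart 𝒜 → IsFinPart ℬ → SameMeasures P 𝒜 ℬ → I 𝒜 = I ℬ

/-- The operation `T_{V,W}`, replacing the atom `A₁ ⊇ V` by `(A₁∖V)∪W` and the atom
`A₂ ⊇ W` by `(A₂∖W)∪V`. -/
noncomputable def swap (V W A₁ A₂ : Set Ω) (𝒜 : Finset (Set Ω)) : Finset (Set Ω) := by
  classical
  exact insert ((A₁ \ V) ∪ W) (insert ((A₂ \ W) ∪ V) ((𝒜.erase A₁).erase A₂))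

/-- `ε(λ) = min (1/(1+λ)) (1/(1+λ⁻¹))`. -/
noncomputable def epsFun (lam : ℝ) : ℝ := min (1 / (1 + lam)) (1 / (1 + lam⁻¹))

/-- An indexed finite measurable partition. -/
def IsPartIdx {n : ℕ} (A : Fin n → Set Ω) : Prop :=
  (∀ i, MeasurableSet (A i)) ∧ (∀ i, A i ≠ ∅) ∧
    (∀ i j, i ≠ j → Disjoint (A i) (A j)) ∧ (⋃ i, A i) = Set.univ

/-- The finset of atoms of an indexed partition. -/
noncomputable def idxFinset {n : ℕ} (A : Fin n → Set Ω) : Finset (Set Ω) := by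
  classical
  exact Finset.univ.image A

/-- The two-atom family `{A, B}`. -/
noncomputable def pairPart (A B : Set Ω) : Finset (Set Ω) := by
  classical
  exact {A, B}

/-- Membership of `𝒜` in `F_λ(V,W)`, with designated distinct atoms `A₁ ⊇ V`,
`A₂ ⊇ W` such that `P(A₂)/P(A₁) = λ`. -/
def memF (P : Measure Ω) (V W : Set Ω) (lam : ℝ) (𝒜 : Finset (Set Ω))
    (A₁ A₂ : Set Ω) : Prop :=
  IsFinPart 𝒜 ∧ A₁ ∈ 𝒜 ∧ A₂ ∈ 𝒜 ∧ A₁ ≠ A₂ ∧ V ⊆ A₁ ∧ W ⊆ A₂ ∧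
    (P A₂).toReal / (P A₁).toReal = lam

/-- Measurable sets with rational measure. -/
def InRat (P : Measure Ω) (A : Set Ω) : Prop :=
  MeasurableSet A ∧ ∃ q : ℚ, (P A).toReal = (q : ℝ)

/-- The characteristic properties of `Δ(V,W,λ)` associated with an additive
partition entropy `I` (Proposition 3 of the paper). -/
def DeltaSpec (P : Measure Ω) (I : Finset (Set Ω) → ℝ)
    (Δ : Set Ω → Set Ω → ℝ → ℝ) : Prop :=
  (∀ V W : Set Ω, ∀ lam : ℝ, MeasurableSet V → MeasurableSet W → P V = P W →
      0 < lam → Disjoint V W →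
      ∀ 𝒜 A₁ A₂, memF P V W lam 𝒜 A₁ A₂ →
        Δ V W lam = I (swap V W A₁ A₂ 𝒜) - I 𝒜) ∧
  (∀ U V W : Set Ω, ∀ lam : ℝ, MeasurableSet U → MeasurableSet V → MeasurableSet W →
      P U = P V → P V = P W → 0 < lam →
      Δ U W lam = Δ U V lam + Δ V W lam) ∧
  (∀ V₁ V₂ W₁ W₂ : Set Ω, ∀ lam : ℝ, MeasurableSet V₁ → MeasurableSet V₂ →
      MeasurableSet W₁ → MeasurableSet W₂ → Disjoint V₁ V₂ → Disjoint W₁ W₂ →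
      P V₁ = P W₁ → P V₂ = P W₂ → 0 < lam →
      Δ (V₁ ∪ V₂) (W₁ ∪ W₂) lam = Δ V₁ W₁ lam + Δ V₂ W₂ lam) ∧
  (∀ V W : Set Ω, ∀ kap lam : ℝ, MeasurableSet V → MeasurableSet W → P V = P W →
      0 < kap → 0 < lam →
      Δ V W (kap * lam) = Δ V W kap + Δ V W lam)

/-- Two sets that agree off a set of small measure have close values under `P` and under `m`: both
differences `A ∖ B` and `B ∖ A` are contained in the exceptional set. -/
lemma exists_measure_close {Ω : Type*} [MeasurableSpace Ω] (P : Measure Ω) [IsProbabilityMeasure P]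
    (m : Set Ω → ℝ) (hadd : FinAdd m) (hac : AbsCont P m) {η : ℝ} (hη : 0 < η) :
    ∃ δ : ℝ, 0 < δ ∧ ∀ A B Z : Set Ω, MeasurableSet A → MeasurableSet B →
      A ∩ Zᶜ = B ∩ Zᶜ → (P Z).toReal < δ →
      |(P B).toReal - (P A).toReal| < η ∧ |m B - m A| < η := by
  obtain ⟨δ, hδ, h⟩ := hac (η / 2) (half_pos hη)
  refine ⟨min δ η, lt_min hδ hη, fun A B Z hA hB hAB hZ => ?_⟩
  have key : ∀ A B : Set Ω, MeasurableSet A → MeasurableSet B → A ∩ Zᶜ = B ∩ Zᶜ →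
      (P (A \ B)).toReal < min δ η ∧ m A = m (A ∩ B) + m (A \ B) ∧
      (P A).toReal = (P (A ∩ B)).toReal + (P (A \ B)).toReal := by
    intro A B hA hB hAB
    refine ⟨lt_of_le_of_lt ?_ hZ, ?_, ?_⟩
    · refine measureReal_mono (μ := P) (fun x hx => ?_)
      by_contra hxZ
      have : x ∈ B ∩ Zᶜ := hAB ▸ ⟨hx.1, hxZ⟩
      exact hx.2 this.1
    · rw [← hadd _ _ (hA.inter hB) (hA.diff hB)
        (Set.disjoint_sdiff_right.mono_left Set.inter_subset_right), Set.inter_union_sdiff]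
    · exact (measureReal_inter_add_sdiff (μ := P) hB).symm
  obtain ⟨a1, a2, a3⟩ := key A B hA hB hAB
  obtain ⟨b1, b2, b3⟩ := key B A hB hA hAB.symm
  rw [Set.inter_comm] at b2 b3
  have ma := h _ (hA.diff hB) (a1.trans_le (min_le_left _ _))
  have mb := h _ (hB.diff hA) (b1.trans_le (min_le_left _ _))
  have a1' := a1.trans_le (min_le_right _ _)
  have b1' := b1.trans_le (min_le_right _ _)
  have a0 : 0 ≤ (P (A \ B)).toReal := ENNReal.toReal_nonneg
  have b0 : 0 ≤ (P (B \ A)).toReal := ENNReal.toReal_nonneg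
  rw [abs_lt] at ma mb
  constructor <;> rw [abs_lt] <;> constructor <;> linarith

/-- Continuity of a single term of `Lm` at an atom of positive measure. -/
lemma exists_term_close {Ω : Type*} [MeasurableSpace Ω] (P : Measure Ω) [IsProbabilityMeasure P]
    (m : Set Ω → ℝ) (hadd : FinAdd m) (hac : AbsCont P m) {A : Set Ω} (hA : MeasurableSet A)
    (hpos : 0 < (P A).toReal) {ε : ℝ} (hε : 0 < ε) :
    ∃ δ : ℝ, 0 < δ ∧ ∀ B Z : Set Ω, MeasurableSet B →
      A ∩ Zᶜ = B ∩ Zᶜ → (P Z).toReal < δ →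
      |m B * Real.logb 2 (1 / (P B).toReal) - m A * Real.logb 2 (1 / (P A).toReal)| < ε := by
  have hc : ContinuousAt (fun q : ℝ × ℝ => q.2 * Real.logb 2 (1 / q.1))
      ((P A).toReal, m A) := by
    refine continuousAt_snd.mul ?_
    unfold Real.logb
    refine ContinuousAt.div_const (ContinuousAt.log ?_ ?_) _
    · exact continuousAt_const.div continuousAt_fst hpos.ne'
    · exact one_div_ne_zero hpos.ne'
  obtain ⟨η, hη, h⟩ := Metric.continuousAt_iff.1 hc ε hε
  obtain ⟨δ, hδ, h'⟩ := exists_measure_close P m hadd hac hη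
  refine ⟨δ, hδ, fun B Z hB hAB hZ => ?_⟩
  obtain ⟨h1, h2⟩ := h' A B Z hA hB hAB hZ
  exact h (x := ((P B).toReal, m B)) (max_lt h1 h2)

/-- If `𝒜` and `ℬ` have equally many atoms of positive measure and agree off a set `Z` of measure
smaller than that of every positive atom of `𝒜`, then the positive atoms of `ℬ` are matched with
those of `𝒜`, so that `Lm P m ℬ` is a sum over the positive atoms of `𝒜`. -/
lemma Lm_eq_sum_of_restr_eq {Ω : Type*} [MeasurableSpace Ω] (P : Measure Ω)
    [IsProbabilityMeasure P] (m : Set Ω → ℝ) {𝒜 ℬ 𝒜' : Finset (Set Ω)}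
    (h𝒜 : IsFinPart 𝒜) (hmem : ∀ A, A ∈ 𝒜' ↔ A ∈ 𝒜 ∧ 0 < P A)
    (hN : numPos P ℬ = 𝒜'.card) {Z : Set Ω} (hZ : restr 𝒜 Zᶜ = restr ℬ Zᶜ)
    (hsmall : ∀ A ∈ 𝒜', (P Z).toReal < (P A).toReal) :
    ∃ φ : Set Ω → Set Ω, (∀ A ∈ 𝒜', φ A ∈ ℬ ∧ A ∩ Zᶜ = φ A ∩ Zᶜ) ∧
      Lm P m ℬ = ∑ A ∈ 𝒜', m (φ A) * Real.logb 2 (1 / (P (φ A)).toReal) := by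
  classical
  have hlt : ∀ A ∈ 𝒜', 0 < P (A ∩ Zᶜ) := by
    intro A hA
    rw [pos_iff_ne_zero]
    intro h0
    have h1 : P A ≤ P Z := by
      calc P A ≤ P (A ∩ Z) + P (A \ Z) := measure_le_inter_add_sdiff P A Z
        _ = P (A ∩ Z) := by rw [Set.sdiff_eq, h0, add_zero]
        _ ≤ P Z := measure_mono Set.inter_subset_right
    exact absurd (hsmall A hA) (not_lt.2 (ENNReal.toReal_mono (measure_ne_top P Z) h1))
  have hne : ∀ A ∈ 𝒜', A ∩ Zᶜ ≠ ∅ := by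
    intro A hA h0
    have := hlt A hA
    simp [h0] at this
  have hex : ∀ A, ∃ B, A ∈ 𝒜' → B ∈ ℬ ∧ A ∩ Zᶜ = B ∩ Zᶜ := by
    intro A
    by_cases hA : A ∈ 𝒜'
    · have h1 : A ∩ Zᶜ ∈ restr 𝒜 Zᶜ :=
        Finset.mem_filter.2 ⟨Finset.mem_image_of_mem _ ((hmem A).1 hA).1, hne A hA⟩
      rw [hZ] at h1
      obtain ⟨B, hB, hBA⟩ := Finset.mem_image.1 (Finset.mem_filter.1 h1).1
      exact ⟨B, fun _ => ⟨hB, hBA.symm⟩⟩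
    · exact ⟨∅, fun h => absurd h hA⟩
  choose φ hφ using hex
  refine ⟨φ, hφ, ?_⟩
  have hinj : Set.InjOn φ (𝒜' : Set (Set Ω)) := by
    intro A hA A' hA' hAA'
    by_contra hcon
    obtain ⟨x, hx⟩ := Set.nonempty_iff_ne_empty.2 (hne A hA)
    have hx' : x ∈ A' ∩ Zᶜ := by
      rw [(hφ A' hA').2, ← hAA', ← (hφ A hA).2]; exact hx
    exact Set.disjoint_left.1
      (h𝒜.2.2.1 ((hmem A).1 hA).1 ((hmem A').1 hA').1 hcon) hx.1 hx'.1
  have himg : 𝒜'.image φ = ℬ.filter fun B => 0 < P B := by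
    refine Finset.eq_of_subset_of_card_le ?_ ?_
    · intro B hB
      obtain ⟨A, hA, rfl⟩ := Finset.mem_image.1 hB
      refine Finset.mem_filter.2 ⟨(hφ A hA).1, (hlt A hA).trans_le ?_⟩
      rw [(hφ A hA).2]
      exact measure_mono Set.inter_subset_left
    · rw [Finset.card_image_of_injOn hinj, ← hN]
      unfold numPos
      convert le_rfl
  rw [← Finset.sum_image (f := fun B => m B * Real.logb 2 (1 / (P B).toReal)) hinj, himg, Lm]
  refine (Finset.sum_filter_of_ne fun B _ hB => ?_).symm
  rw [pos_iff_ne_zero]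
  intro h0
  -- At a null atom the logarithm is that of the junk value `1 / 0 = 0`, hence `0`.
  simp [h0] at hB

/-- If `m ≪ P` then `L_m` is continuous with respect to the
pseudometric `D`. -/
theorem Lm_continuous_of_absCont
    {Ω : Type*} [MeasurableSpace Ω] (P : Measure Ω) [IsProbabilityMeasure P]
    (m : Set Ω → ℝ) (hadd : FinAdd m) (hac : AbsCont P m) :
    CtsD P (Lm P m) := by
  classical
  intro 𝒜 h𝒜 ε hε
  set 𝒜' := 𝒜.filter fun A => 0 < P A with h𝒜'
  have hmem : ∀ A, A ∈ 𝒜' ↔ A ∈ 𝒜 ∧ 0 < P A := fun A => Finset.mem_filter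
  have hN𝒜 : numPos P 𝒜 = 𝒜'.card := by
    unfold numPos
    rw [h𝒜']
  have hp : ∀ A ∈ 𝒜', 0 < (P A).toReal := fun A hA =>
    ENNReal.toReal_pos ((hmem A).1 hA).2.ne' (measure_ne_top P A)
  -- The added `1` keeps the bound positive and makes the final estimate strict.
  set ε' := ε / (𝒜'.card + 1) with hε'
  have hε'0 : 0 < ε' := by positivity
  have hδ : ∀ᶠ δ : ℝ in 𝓝[>] 0, ∀ A ∈ 𝒜', δ < (P A).toReal ∧ ∀ B Z : Set Ω, MeasurableSet B →
      A ∩ Zᶜ = B ∩ Zᶜ → (P Z).toReal < δ →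
      |m B * Real.logb 2 (1 / (P B).toReal) - m A * Real.logb 2 (1 / (P A).toReal)| < ε' := by
    rw [eventually_all_finset]
    intro A hA
    obtain ⟨d, hd, h⟩ := exists_term_close P m hadd hac (h𝒜.1 A ((hmem A).1 hA).1) (hp A hA) hε'0
    filter_upwards [Ioo_mem_nhdsGT hd, Ioo_mem_nhdsGT (hp A hA)] with δ h1 h2
    exact ⟨h2.2, fun B Z hB hAB hZ => h B Z hB hAB (hZ.trans h1.2)⟩
  obtain ⟨δ, hδ, hδ1⟩ := (hδ.and (Ioo_mem_nhdsGT (one_pos (α := ℝ)))).exists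
  refine ⟨δ, hδ1.1, fun ℬ hℬ hD => ?_⟩
  have hS : 0 ≤ sInf ((fun Z => (P Z).toReal) ''
      {Z : Set Ω | MeasurableSet Z ∧ restr 𝒜 Zᶜ = restr ℬ Zᶜ}) := by
    refine Real.sInf_nonneg ?_
    rintro _ ⟨Z, _, rfl⟩
    exact ENNReal.toReal_nonneg
  unfold Ddist at hD
  have hN : numPos P ℬ = 𝒜'.card := by
    have h1 : |(numPos P 𝒜 : ℝ) - (numPos P ℬ : ℝ)| < 1 := by linarith [hδ1.2]
    have h2 : |(numPos P 𝒜 : ℤ) - (numPos P ℬ : ℤ)| < 1 := by exact_mod_cast h1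
    rw [Int.abs_lt_one_iff] at h2
    omega
  obtain ⟨_, ⟨Z, ⟨-, hZ⟩, rfl⟩, hZδ⟩ := exists_lt_of_csInf_lt
    (by
      refine ⟨_, Set.univ, ⟨MeasurableSet.univ, ?_⟩, rfl⟩
      -- Both restrictions to `univᶜ = ∅` are empty, since empty traces are discarded.
      ext s
      simp only [restr, Set.compl_univ, Set.inter_empty, Finset.mem_filter, Finset.mem_image]
      constructor <;> rintro ⟨⟨_, _, h1⟩, h2⟩ <;> exact absurd h1.symm h2)
    ((le_add_of_nonneg_right (abs_nonneg _)).trans_lt hD)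
  obtain ⟨φ, hφ, hL⟩ := Lm_eq_sum_of_restr_eq P m h𝒜 hmem hN hZ
    fun A hA => lt_trans hZδ (hδ A hA).1
  have hL𝒜 : Lm P m 𝒜 = ∑ A ∈ 𝒜', m A * Real.logb 2 (1 / (P A).toReal) := by
    rw [Lm]
    refine (Finset.sum_filter_of_ne fun B _ hB => ?_).symm
    rw [pos_iff_ne_zero]
    intro h0
    simp [h0] at hB
  rw [hL, hL𝒜, ← Finset.sum_sub_distrib]
  calc _ ≤ ∑ A ∈ 𝒜', |m (φ A) * Real.logb 2 (1 / (P (φ A)).toReal)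
        - m A * Real.logb 2 (1 / (P A).toReal)| := Finset.abs_sum_le_sum_abs _ _
    _ ≤ ∑ A ∈ 𝒜', ε' := Finset.sum_le_sum fun A hA =>
        ((hδ A hA).2 (φ A) Z (hℬ.1 _ (hφ A hA).1) (hφ A hA).2 hZδ).le
    _ = 𝒜'.card * ε' := by rw [Finset.sum_const, nsmul_eq_mul]
    _ < (𝒜'.card + 1) * ε' := by linarith
    _ = ε := by rw [hε']; field_simp

end APE
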